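/- Let A and B be finite dimensional algebras over a field k. If A and B are singularly equivalent of Morita type with level l, then |ext.dim(A) − ext.dim(B)| ≤ l. -/

import Mathlib

universe u w w₁ w₂ w₃ v v₁ v₂ v₃

open CategoryTheory Limits Pretriangulated

namespace ExtDim



variable (A : Type u) [Ring A]

/-- `X` belongs to `add M`: `X` is a direct summand of a finite direct sum of copies of `M`. -/
def MemAdd (M X : ModuleCat.{u} A) : Prop :=
  ∃ (n : ℕ) (Y : ModuleCat.{u} A), Nonempty ((↥X × ↥Y) ≃ₗ[A] (Fin n → ↥M))

/-- The operation `𝒞₁ • 𝒞₂` on classes of modules: (summands of) middle terms of short exact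
sequences with outer terms in `𝒞₁` and `𝒞₂`. -/
def Bullet (C₁ C₂ : Set (ModuleCat.{u} A)) : Set (ModuleCat.{u} A) :=
  {X | ∃ (X' M₁ M₂ : ModuleCat.{u} A), M₁ ∈ C₁ ∧ M₂ ∈ C₂ ∧
    ∃ (f : ↥M₁ →ₗ[A] (↥X × ↥X')) (g : (↥X × ↥X') →ₗ[A] ↥M₂),
      Function.Injective f ∧ Function.Surjective g ∧ LinearMap.range f = LinearMap.ker g}

/-- The class `[M]_n`. -/
def bracket (M : ModuleCat.{u} A) : ℕ → Set (ModuleCat.{u} A)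
  | 0 => {X | Subsingleton X}
  | n + 1 => Bullet A {X | MemAdd A M X} (bracket M n)

/-- The extension dimension of a subcategory `𝒜` of `A`-mod: the least `m` such that
`𝒜 ⊆ [M]_{m+1}` for some finitely generated module `M`. -/
noncomputable def extDimCat (𝒜 : Set (ModuleCat.{u} A)) : ℕ∞ :=
  sInf {m : ℕ∞ | ∃ n : ℕ, m = n ∧ ∃ M : ModuleCat.{u} A, Module.Finite A M ∧
    ∀ X ∈ 𝒜, X ∈ bracket A M (n + 1)}

/-- The subcategory of finitely generated modules, `A`-mod. -/
def fgModules : Set (ModuleCat.{u} A) := {X | Module.Finite A X}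

/-- The extension dimension of the Artin algebra `A`. -/
noncomputable def extDim : ℕ∞ := extDimCat A (fgModules A)

/-- A short exact sequence `0 → X → Y → Z → 0` of modules. -/
def SES {X Y Z : ModuleCat.{u} A} (f : ↥X →ₗ[A] ↥Y) (g : ↥Y →ₗ[A] ↥Z) : Prop :=
  Function.Injective f ∧ Function.Surjective g ∧ LinearMap.range f = LinearMap.ker g

/-- `Ω^n(A-mod)`: the subcategory of all `n`-th syzygy modules. -/
def syzygyCat : ℕ → Set (ModuleCat.{u} A)
  | 0 => fgModules A
  | n + 1 => {X | Module.Finite A X ∧ ∃ (P K : ModuleCat.{u} A),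
      Module.Finite A P ∧ Module.Projective A P ∧ K ∈ syzygyCat n ∧
      ∃ (f : ↥X →ₗ[A] ↥P) (g : ↥P →ₗ[A] ↥K), SES A f g}

/-- The `Ω`-extension dimension of `A`. -/
noncomputable def omegaExtDim : ℕ∞ := ⨅ i : ℕ, extDimCat A (syzygyCat A i)

/-- `Ω^∞(A-mod)`: modules admitting an exact sequence `0 → X → P₀ → P₁ → ⋯` with all `Pᵢ`
finitely generated projective. -/
def infSyzygyCat : Set (ModuleCat.{u} A) :=
  {X | Module.Finite A X ∧ ∃ (K P : ℕ → ModuleCat.{u} A), Nonempty (↥(K 0) ≃ₗ[A] ↥X) ∧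
    ∀ i, Module.Finite A (P i) ∧ Module.Projective A (P i) ∧
      ∃ (f : ↥(K i) →ₗ[A] ↥(P i)) (g : ↥(P i) →ₗ[A] ↥(K (i + 1))), SES A f g}

/-- `X` has projective dimension at most `n`. -/
def ProjDimLE : ModuleCat.{u} A → ℕ → Prop
  | X, 0 => Module.Projective A X
  | X, n + 1 => ∃ (K P : ModuleCat.{u} A), Module.Projective A P ∧
      (∃ (f : ↥K →ₗ[A] ↥P) (g : ↥P →ₗ[A] ↥X), SES A f g) ∧ ProjDimLE K n

/-- The projective dimension of a module, as an element of `ℕ∞`. -/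
noncomputable def pdim (X : ModuleCat.{u} A) : ℕ∞ :=
  sInf {m : ℕ∞ | ∃ n : ℕ, m = n ∧ ProjDimLE A X n}

/-- `A` has finite global dimension. -/
def HasFiniteGlobalDimension : Prop := ∃ n : ℕ, ∀ X : ModuleCat.{u} A, ProjDimLE A X n

section StableSyzygy

variable (R : Type u) [Ring R]

/-- `K` is (isomorphic to) the kernel of a surjection from a finitely generated projective
module onto `W`, i.e. a first syzygy of `W`. -/
def IsSyzygyStep (W K : ModuleCat.{u} R) : Prop :=
  ∃ P : ModuleCat.{u} R, Module.Finite R P ∧ Module.Projective R P ∧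
    ∃ (f : ↥K →ₗ[R] ↥P) (g : ↥P →ₗ[R] ↥W), SES R f g

/-- `K` is an `l`-th syzygy of `W` (computed from some resolution by finitely generated
projective modules). -/
def IsNthSyzygy : ℕ → ModuleCat.{u} R → ModuleCat.{u} R → Prop
  | 0, W, K => Nonempty (↥K ≃ₗ[R] ↥W)
  | n + 1, W, K => ∃ K₁ : ModuleCat.{u} R, IsSyzygyStep R W K₁ ∧ IsNthSyzygy n K₁ K

/-- `Z` and `W` are isomorphic in the stable category: they become isomorphic after adding
(finitely generated) projective direct summands to both sides. -/
def StablyIsomorphic (Z W : ModuleCat.{u} R) : Prop :=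
  ∃ P Q : ModuleCat.{u} R, Module.Finite R P ∧ Module.Projective R P ∧
    Module.Finite R Q ∧ Module.Projective R Q ∧
    Nonempty ((↥Z × ↥P) ≃ₗ[R] (↥W × ↥Q))

/-- `Z` is isomorphic, in the stable category, to the `l`-th syzygy `Ω^l(W)`. -/
def StablyIsoNthSyzygy (l : ℕ) (Z W : ModuleCat.{u} R) : Prop :=
  ∃ K : ModuleCat.{u} R, IsNthSyzygy R l W K ∧ StablyIsomorphic R Z K

end StableSyzygy

section TensorData

variable (R : Type u) [Ring R]

/-- `β` is a biadditive `R`-balanced map. -/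
def IsBalancedBiadd {X Y T : Type u} [AddCommGroup X] [AddCommGroup Y] [AddCommGroup T]
    [Module Rᵐᵒᵖ X] [Module R Y] (β : X → Y → T) : Prop :=
  (∀ x₁ x₂ y, β (x₁ + x₂) y = β x₁ y + β x₂ y) ∧
  (∀ x y₁ y₂, β x (y₁ + y₂) = β x y₁ + β x y₂) ∧
  (∀ (r : R) x y, β (MulOpposite.op r • x) y = β x (r • y))

/-- `β : X → Y → T` realizes `T` as the tensor product `X ⊗_R Y` of the right `R`-module `X`
and the left `R`-module `Y`: it is a universal biadditive `R`-balanced map. -/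
def IsTensorProductOver {X Y T : Type u} [AddCommGroup X] [AddCommGroup Y] [AddCommGroup T]
    [Module Rᵐᵒᵖ X] [Module R Y] (β : X → Y → T) : Prop :=
  IsBalancedBiadd R β ∧
  ∀ (T' : Type u) [AddCommGroup T'] (β' : X → Y → T'), IsBalancedBiadd R β' →
    ∃! φ : T →+ T', ∀ x y, φ (β x y) = β' x y

end TensorData

section Enveloping

open scoped TensorProduct

variable (k : Type u) [CommRing k] (A : Type u) [Ring A] [Algebra k A]

/-- A `k`-central `A`-`A`-bimodule, regarded as a module over the enveloping algebra
`A^e = A ⊗[k] Aᵐᵒᵖ`. -/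
noncomputable def envModuleCat (T : Type u) [AddCommGroup T] [Module k T] [Module A T]
    [Module Aᵐᵒᵖ T] [IsScalarTower k A T] [IsScalarTower k Aᵐᵒᵖ T] [SMulCommClass A Aᵐᵒᵖ T] :
    ModuleCat.{u} (A ⊗[k] Aᵐᵒᵖ) :=
  letI : Module (A ⊗[k] Aᵐᵒᵖ) T := TensorProduct.Algebra.module
  ModuleCat.of _ T

end Enveloping

section Statement

open scoped TensorProduct

variable (k : Type u) [Field k]
variable (A B : Type u) [Ring A] [Ring B] [Algebra k A] [Algebra k B]
variable [Module.Finite k A] [Module.Finite k B]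
variable (M : Type u) [AddCommGroup M] [Module k M] [Module A M] [Module Bᵐᵒᵖ M]
variable [IsScalarTower k A M] [IsScalarTower k Bᵐᵒᵖ M] [SMulCommClass A Bᵐᵒᵖ M]
variable (N : Type u) [AddCommGroup N] [Module k N] [Module B N] [Module Aᵐᵒᵖ N]
variable [IsScalarTower k B N] [IsScalarTower k Aᵐᵒᵖ N] [SMulCommClass B Aᵐᵒᵖ N]

/-- The pair of bimodules `(M, N)` defines a singular equivalence of Morita type with
level `l`: the four one-sided modules are finitely generated projective, and
`M ⊗_B N ≅ Ω^l_{A^e}(A)`, `N ⊗_A M ≅ Ω^l_{B^e}(B)` in the stable categories of bimodules.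
The tensor products are encoded via their universal property. -/
def SingularEquivalenceOfMoritaTypeWithLevel (l : ℕ) : Prop :=
  Module.Finite A M ∧ Module.Projective A M ∧
  Module.Finite Bᵐᵒᵖ M ∧ Module.Projective Bᵐᵒᵖ M ∧
  Module.Finite B N ∧ Module.Projective B N ∧
  Module.Finite Aᵐᵒᵖ N ∧ Module.Projective Aᵐᵒᵖ N ∧
  (∀ (T : Type u) [AddCommGroup T] [Module k T] [Module A T] [Module Aᵐᵒᵖ T]
      [IsScalarTower k A T] [IsScalarTower k Aᵐᵒᵖ T] [SMulCommClass A Aᵐᵒᵖ T]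
      (β : M → N → T), IsTensorProductOver B β →
      (∀ (a : A) (m : M) (n : N), β (a • m) n = a • β m n) →
      (∀ (a : Aᵐᵒᵖ) (m : M) (n : N), β m (a • n) = a • β m n) →
      (∀ (c : k) (m : M) (n : N), β (c • m) n = c • β m n) →
      StablyIsoNthSyzygy (A ⊗[k] Aᵐᵒᵖ) l (envModuleCat k A T) (envModuleCat k A A)) ∧
  (∀ (T : Type u) [AddCommGroup T] [Module k T] [Module B T] [Module Bᵐᵒᵖ T]
      [IsScalarTower k B T] [IsScalarTower k Bᵐᵒᵖ T] [SMulCommClass B Bᵐᵒᵖ T]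
      (β : N → M → T), IsTensorProductOver A β →
      (∀ (b : B) (n : N) (m : M), β (b • n) m = b • β n m) →
      (∀ (b : Bᵐᵒᵖ) (n : N) (m : M), β n (b • m) = b • β n m) →
      (∀ (c : k) (n : N) (m : M), β (c • n) m = c • β n m) →
      StablyIsoNthSyzygy (B ⊗[k] Bᵐᵒᵖ) l (envModuleCat k B T) (envModuleCat k B B))

end Statement

end ExtDim

namespace ExtDim

/-!
Let `B`-mod `= [U]_{n+1}` and let `X` be a finitely generated `A`-module. Then `N ⊗_A X` lies in
`[U]_{n+1}`, so the exact functor `M ⊗_B -` sends it into `[M ⊗_B U]_{n+1}`. On the other hand, a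
resolution of the bimodule `A` by projective bimodules splits as a sequence of right `A`-modules, so
it stays exact after `- ⊗_A X` and becomes a projective resolution of `X`; hence `M ⊗_B N ⊗_A X` is
the syzygy `Ω^l X` up to projectives. Finally `Σ X = Coker (X → Hom_k(A, X))` is an exact functor,
and every first syzygy `K` of `X` yields an exact sequence `0 → P → X ⊕ Hom_k(A, K) → Σ K → 0` with
`P` projective. So `K ∈ [V]_m` implies `X ∈ [Σ V ⊕ A]_{m+1}`, and `X` is recovered from its `l`-th
syzygy in `l` further steps, starting from a module that does not depend on `X`.
-/

section Retract

variable {R : Type u} [Ring R]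

/-- The retract of modules given by a linear section `i` of a linear map `r`. -/
def retractOfComp {X E : Type u} [AddCommGroup X] [Module R X] [AddCommGroup E] [Module R E]
    (i : X →ₗ[R] E) (r : E →ₗ[R] X) (h : r ∘ₗ i = LinearMap.id) :
    Retract (ModuleCat.of R X) (ModuleCat.of R E) where
  i := ModuleCat.ofHom i
  r := ModuleCat.ofHom r
  retract := ModuleCat.hom_ext h

/-- Linearly equivalent modules are retracts of each other. -/
def retractOfEquiv {X E : Type u} [AddCommGroup X] [Module R X] [AddCommGroup E] [Module R E]
    (e : X ≃ₗ[R] E) : Retract (ModuleCat.of R X) (ModuleCat.of R E) :=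
  Retract.ofIso e.toModuleIso

/-- The first summand of a direct sum as a retract. -/
def retractProdLeft (X Y : ModuleCat.{u} R) : Retract X (ModuleCat.of R (X × Y)) :=
  retractOfComp (.inl R X Y) (.fst R X Y) (LinearMap.fst_comp_inl R X Y)

/-- The second summand of a direct sum as a retract. -/
def retractProdRight (X Y : ModuleCat.{u} R) : Retract Y (ModuleCat.of R (X × Y)) :=
  retractOfComp (.inr R X Y) (.snd R X Y) (LinearMap.snd_comp_inr R X Y)

theorem retract_hom_comp {X E : ModuleCat.{u} R} (h : Retract X E) :
    h.r.hom ∘ₗ h.i.hom = LinearMap.id :=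
  ModuleCat.hom_ext_iff.mp h.retract

theorem nonempty_retract_iff {X E : ModuleCat.{u} R} :
    Nonempty (Retract X E) ↔ ∃ Y : ModuleCat.{u} R, Nonempty ((↥X × ↥Y) ≃ₗ[R] ↥E) := by
  constructor
  · rintro ⟨h⟩
    let e := (LinearMap.exact_subtype_ker_map h.r.hom).splitSurjectiveEquiv
      (Submodule.subtype_injective _) ⟨h.i.hom, retract_hom_comp h⟩
    exact ⟨ModuleCat.of R (LinearMap.ker h.r.hom),
      ⟨(LinearEquiv.prodComm R _ _).trans e.1.symm⟩⟩
  · rintro ⟨Y, ⟨e⟩⟩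
    exact ⟨(retractProdLeft X Y).trans (retractOfEquiv e)⟩

end Retract

section Add

variable {R : Type u} [Ring R] {M M' X Y : ModuleCat.{u} R}

theorem memAdd_iff :
    MemAdd R M X ↔ ∃ n : ℕ, Nonempty (Retract X (ModuleCat.of R (Fin n → M))) := by
  simp only [nonempty_retract_iff]
  rfl

theorem MemAdd.mono (h : Retract M M') (hX : MemAdd R M X) : MemAdd R M' X := by
  obtain ⟨n, ⟨hn⟩⟩ := memAdd_iff.mp hX
  refine memAdd_iff.mpr ⟨n, ⟨hn.trans (retractOfComp (h.i.hom.compLeft _) (h.r.hom.compLeft _) ?_)⟩⟩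
  ext x j
  exact LinearMap.congr_fun (retract_hom_comp h) _

theorem MemAdd.prod (hX : MemAdd R M X) (hY : MemAdd R M Y) :
    MemAdd R M (ModuleCat.of R (X × Y)) := by
  obtain ⟨m, X', ⟨e⟩⟩ := hX
  obtain ⟨n, Y', ⟨e'⟩⟩ := hY
  exact ⟨m + n, ModuleCat.of R (X' × Y'), ⟨(LinearEquiv.prodProdProdComm R X Y X' Y').trans <|
    (e.prodCongr e').trans <| (LinearEquiv.sumArrowLequivProdArrow _ _ R M).symm.trans <|
    LinearEquiv.funCongrLeft R M finSumFinEquiv.symm⟩⟩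

theorem MemAdd.map {S : Type u} [Ring S] (F : ModuleCat.{u} R ⥤ ModuleCat.{u} S) [F.Additive]
    (h : MemAdd R M X) : MemAdd S (F.obj M) (F.obj X) := by
  obtain ⟨n, ⟨hn⟩⟩ := memAdd_iff.mp h
  have e : F.obj (ModuleCat.of R (Fin n → M)) ≅ ModuleCat.of S (Fin n → F.obj M) :=
    F.mapIso (ModuleCat.biproductIsoPi fun _ : Fin n ↦ M).symm ≪≫ F.mapBiproduct _ ≪≫
      ModuleCat.biproductIsoPi fun _ : Fin n ↦ F.obj M
  exact memAdd_iff.mpr ⟨n, ⟨(hn.map F).trans (.ofIso e)⟩⟩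

theorem MemAdd.finite [Module.Finite R M] (h : MemAdd R M X) : Module.Finite R X := by
  obtain ⟨n, ⟨h⟩⟩ := memAdd_iff.mp h
  exact .of_surjective h.r.hom (LinearMap.surjective_of_comp_eq_id _ _ (retract_hom_comp h))

theorem MemAdd.projective [Module.Projective R M] (h : MemAdd R M X) : Module.Projective R X := by
  obtain ⟨n, ⟨h⟩⟩ := memAdd_iff.mp h
  have : Module.Projective R (Fin n → M) := .of_equiv DFinsupp.linearEquivFunOnFintype
  exact .of_split h.i.hom h.r.hom (retract_hom_comp h)

theorem memAdd_self [Module.Finite R X] [Module.Projective R X] :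
    MemAdd R (ModuleCat.of R R) X := by
  obtain ⟨n, r, i, -, -, h⟩ := Module.Finite.exists_comp_eq_id_of_projective R X
  exact memAdd_iff.mpr ⟨n, ⟨retractOfComp i r h⟩⟩

end Add

section Bracket

variable {R : Type u} [Ring R]

theorem ses_iff_shortExact {S : ShortComplex (ModuleCat.{u} R)} :
    SES R S.f.hom S.g.hom ↔ S.ShortExact := by
  refine ⟨fun ⟨hf, hg, h⟩ ↦ ?_, fun h ↦ ⟨h.moduleCat_injective_f, h.moduleCat_surjective_g,
    h.exact.moduleCat_range_eq_ker⟩⟩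
  exact { exact := .moduleCat_of_range_eq_ker _ _ h
          mono_f := (ModuleCat.mono_iff_injective _).mpr hf
          epi_g := (ModuleCat.epi_iff_surjective _).mpr hg }

theorem SES.comp_eq_zero {X Y Z : ModuleCat.{u} R} {f : X →ₗ[R] Y} {g : Y →ₗ[R] Z}
    (h : SES R f g) : g ∘ₗ f = 0 :=
  LinearMap.range_le_ker_iff.mp h.2.2.le

theorem SES.map {S : Type u} [Ring S] {F : ModuleCat.{u} R ⥤ ModuleCat.{u} S} [F.Additive]
    (hF : ∀ T : ShortComplex (ModuleCat.{u} R), T.ShortExact → (T.map F).ShortExact)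
    {X Y Z : ModuleCat.{u} R} {f : X →ₗ[R] Y} {g : Y →ₗ[R] Z} (h : SES R f g) :
    SES S (F.map (ModuleCat.ofHom f)).hom (F.map (ModuleCat.ofHom g)).hom :=
  ses_iff_shortExact.mpr <|
    hF (.mk _ _ (ModuleCat.hom_ext h.comp_eq_zero)) (ses_iff_shortExact.mp h)

theorem mem_bullet_iff {C₁ C₂ : Set (ModuleCat.{u} R)} {X : ModuleCat.{u} R} :
    X ∈ Bullet R C₁ C₂ ↔ ∃ E M₁ M₂ : ModuleCat.{u} R, Nonempty (Retract X E) ∧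
      M₁ ∈ C₁ ∧ M₂ ∈ C₂ ∧ ∃ (f : M₁ →ₗ[R] E) (g : E →ₗ[R] M₂), SES R f g := by
  constructor
  · rintro ⟨X', M₁, M₂, h₁, h₂, f, g, h⟩
    exact ⟨ModuleCat.of R (X × X'), M₁, M₂, nonempty_retract_iff.mpr ⟨X', ⟨.refl R _⟩⟩,
      h₁, h₂, f, g, h⟩
  · rintro ⟨E, M₁, M₂, hX, h₁, h₂, f, g, hf, hg, h⟩
    obtain ⟨X', ⟨e⟩⟩ := nonempty_retract_iff.mp hX
    refine ⟨X', M₁, M₂, h₁, h₂, e.symm.toLinearMap ∘ₗ f, g ∘ₗ e.toLinearMap,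
      e.symm.injective.comp hf, hg.comp e.surjective, ?_⟩
    rw [LinearMap.range_comp, h, LinearMap.ker_comp, Submodule.comap_equiv_eq_map_symm]

variable {M M' X Y : ModuleCat.{u} R} {n : ℕ}

theorem bracket_of_retract (h : Retract X Y) (hY : Y ∈ bracket R M n) : X ∈ bracket R M n := by
  cases n with
  | zero =>
    have : Subsingleton Y := hY
    exact (LinearMap.injective_of_comp_eq_id _ _ (retract_hom_comp h)).subsingleton
  | succ n =>
    obtain ⟨E, M₁, M₂, ⟨hE⟩, hY⟩ := mem_bullet_iff.mp hY
    exact mem_bullet_iff.mpr ⟨E, M₁, M₂, ⟨h.trans hE⟩, hY⟩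

theorem bracket_mono (h : Retract M M') (n : ℕ) : bracket R M n ⊆ bracket R M' n := by
  induction n with
  | zero => exact subset_rfl
  | succ n ih =>
    rintro X ⟨X', M₁, M₂, h₁, h₂, hX⟩
    exact ⟨X', M₁, M₂, MemAdd.mono h h₁, ih h₂, hX⟩

theorem bracket_prod_memAdd (hX : X ∈ bracket R M (n + 1)) (hY : MemAdd R M Y) :
    ModuleCat.of R (X × Y) ∈ bracket R M (n + 1) := by
  obtain ⟨E, M₁, M₂, ⟨hE⟩, h₁, h₂, f, g, hf, hg, h⟩ := mem_bullet_iff.mp hX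
  refine mem_bullet_iff.mpr ⟨ModuleCat.of R (E × Y), ModuleCat.of R (M₁ × Y), M₂,
    ⟨retractOfComp (hE.i.hom.prodMap .id) (hE.r.hom.prodMap .id) ?_⟩, MemAdd.prod h₁ hY, h₂,
    f.prodMap .id, g ∘ₗ .fst R E Y, hf.prodMap Function.injective_id,
    hg.comp Prod.fst_surjective, ?_⟩
  · rw [LinearMap.prodMap_comp, retract_hom_comp, LinearMap.id_comp, LinearMap.prodMap_id]
  · ext ⟨e, y⟩
    simp [LinearMap.range_prodMap, h]

theorem bracket_map {S : Type u} [Ring S] {F : ModuleCat.{u} R ⥤ ModuleCat.{u} S} [F.Additive]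
    (hF : ∀ T : ShortComplex (ModuleCat.{u} R), T.ShortExact → (T.map F).ShortExact)
    (hX : X ∈ bracket R M n) : F.obj X ∈ bracket S (F.obj M) n := by
  induction n generalizing X with
  | zero =>
    rw [bracket, Set.mem_ofPred_eq, ← ModuleCat.isZero_iff_subsingleton] at hX ⊢
    exact F.map_isZero hX
  | succ n ih =>
    obtain ⟨E, M₁, M₂, ⟨hE⟩, h₁, h₂, f, g, h⟩ := mem_bullet_iff.mp hX
    exact mem_bullet_iff.mpr ⟨F.obj E, F.obj M₁, F.obj M₂, ⟨hE.map F⟩, MemAdd.map F h₁, ih h₂,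
      _, _, h.map hF⟩

/-- Additive functors preserve binary direct sums. -/
noncomputable def mapProdIso {S : Type u} [Ring S] (F : ModuleCat.{u} R ⥤ ModuleCat.{u} S)
    [F.Additive] (X Y : ModuleCat.{u} R) :
    F.obj (ModuleCat.of R (X × Y)) ≅ ModuleCat.of S (F.obj X × F.obj Y) :=
  have := preservesBinaryBiproduct_of_preservesBiproduct F X Y
  F.mapIso (ModuleCat.biprodIsoProd X Y).symm ≪≫ F.mapBiprod X Y ≪≫ ModuleCat.biprodIsoProd _ _

theorem bracket_map_of_stablyIsomorphic {S : Type u} [Ring S]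
    {F : ModuleCat.{u} R ⥤ ModuleCat.{u} S} [F.Additive] {V : ModuleCat.{u} S}
    (hF : ∀ P : ModuleCat.{u} R, Module.Finite R P → Module.Projective R P →
      MemAdd S V (F.obj P))
    (h : StablyIsomorphic R X Y) (hX : F.obj X ∈ bracket S V (n + 1)) :
    F.obj Y ∈ bracket S V (n + 1) := by
  obtain ⟨P, Q, _, _, _, _, ⟨e⟩⟩ := h
  have hY : Retract Y (ModuleCat.of R (X × P)) :=
    (retractProdLeft Y Q).trans (retractOfEquiv e.symm)
  exact bracket_of_retract ((hY.map F).trans (.ofIso (mapProdIso F X P)))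
    (bracket_prod_memAdd hX (hF P ‹_› ‹_›))

theorem extDimCat_le_add {S : Type u} [Ring S] {𝒜 : Set (ModuleCat.{u} R)}
    {ℬ : Set (ModuleCat.{u} S)} (l : ℕ)
    (h : ∀ (n : ℕ) (U : ModuleCat.{u} R), Module.Finite R U → 𝒜 ⊆ bracket R U (n + 1) →
      ∃ V : ModuleCat.{u} S, Module.Finite S V ∧ ℬ ⊆ bracket S V (n + l + 1)) :
    extDimCat S ℬ ≤ extDimCat R 𝒜 + l := by
  rw [extDimCat, extDimCat, ENat.sInf_add]
  refine le_iInf₂ ?_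
  rintro _ ⟨n, rfl, U, hU, h𝒜⟩
  obtain ⟨V, hV, hℬ⟩ := h n U hU h𝒜
  exact sInf_le ⟨n + l, (Nat.cast_add n l).symm, V, hV, hℬ⟩

end Bracket

section Cosyzygy

variable (k A : Type u) [Field k] [Ring A] [Algebra k A]

variable (X : Type u) [AddCommGroup X] [Module k X]

/-- The coinduced module `Hom_k(A, X)`, on which `A` acts through right multiplication on the
source. -/
def Coinduced : Type u := A →ₗ[k] X

namespace Coinduced

noncomputable instance : AddCommGroup (Coinduced k A X) :=
  inferInstanceAs (AddCommGroup (A →ₗ[k] X))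

instance : FunLike (Coinduced k A X) A X := inferInstanceAs (FunLike (A →ₗ[k] X) A X)

instance : LinearMapClass (Coinduced k A X) k A X :=
  inferInstanceAs (LinearMapClass (A →ₗ[k] X) k A X)

variable {k A X}

@[ext]
theorem ext {h h' : Coinduced k A X} (H : ∀ b, h b = h' b) : h = h' := DFunLike.ext _ _ H

@[simp]
theorem sub_apply (h h' : Coinduced k A X) (b : A) : (h - h') b = h b - h' b := rfl

noncomputable instance : Module A (Coinduced k A X) where
  smul a h := LinearMap.comp h (LinearMap.mulRight k a)
  one_smul h := ext fun b ↦ congrArg h (mul_one b)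
  mul_smul a a' h := ext fun b ↦ congrArg h (mul_assoc b a a').symm
  smul_zero _ := rfl
  smul_add _ _ _ := rfl
  add_smul a a' h := ext fun b ↦ (congrArg h (mul_add b a a')).trans (map_add h _ _)
  zero_smul h := ext fun b ↦ (congrArg h (mul_zero b)).trans (map_zero h)

/-- The `A`-linear map `P → Hom_k(A, X)` adjoint to a `k`-linear map `t : P → X`. -/
def lift {P : Type u} [AddCommGroup P] [Module k P] [Module A P] [IsScalarTower k A P]
    (t : P →ₗ[k] X) : P →ₗ[A] Coinduced k A X where
  toFun p := t ∘ₗ (LinearMap.toSpanSingleton A P p).restrictScalars k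
  map_add' p q := ext fun b ↦ (congrArg t (smul_add b p q)).trans (map_add t _ _)
  map_smul' a p := ext fun b ↦ congrArg t (mul_smul b a p).symm

/-- Postcomposition with a `k`-linear map. -/
def map {Y : Type u} [AddCommGroup Y] [Module k Y] (f : X →ₗ[k] Y) :
    Coinduced k A X →ₗ[A] Coinduced k A Y where
  toFun h := f ∘ₗ h
  map_add' _ _ := ext fun _ ↦ map_add f _ _
  map_smul' _ _ := rfl

@[simp]
theorem map_apply {Y : Type u} [AddCommGroup Y] [Module k Y] (f : X →ₗ[k] Y)
    (h : Coinduced k A X) (b : A) : map f h b = f (h b) := rfl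

instance [Module.Finite k A] [Module.Finite k X] : Module.Finite A (Coinduced k A X) := by
  let _ : Module k (Coinduced k A X) := inferInstanceAs (Module k (A →ₗ[k] X))
  have : Module.Finite k (Coinduced k A X) := inferInstanceAs (Module.Finite k (A →ₗ[k] X))
  have : IsScalarTower k A (Coinduced k A X) :=
    ⟨fun c a h ↦ ext fun b ↦ (congrArg h (mul_smul_comm c b a)).trans (map_smul h c _)⟩
  exact .of_restrictScalars_finite k A _

end Coinduced

open scoped ModuleCat

variable {k A}

namespace Coinduced

variable (k) in
/-- The map `X → Hom_k(A, X)` sending `x` to `b ↦ b • x`. -/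
def unit (X : ModuleCat.{u} A) : X →ₗ[A] Coinduced k A X := lift .id

@[simp]
theorem unit_apply {X : ModuleCat.{u} A} (x : X) (b : A) : unit k X x b = b • x := rfl

theorem unit_injective (X : ModuleCat.{u} A) : Function.Injective (unit k X) := fun x y h ↦ by
  simpa using DFunLike.congr_fun h 1

end Coinduced

variable (k) in
/-- The functorial cosyzygy: the cokernel of `X → Hom_k(A, X)`. -/
abbrev Cosyzygy (X : ModuleCat.{u} A) : Type u :=
  Coinduced k A X ⧸ LinearMap.range (Coinduced.unit k X)

theorem ses_unit_mkQ (X : ModuleCat.{u} A) :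
    SES A (Y := ModuleCat.of A (Coinduced k A X)) (Z := ModuleCat.of A (Cosyzygy k X))
      (Coinduced.unit k X) (Submodule.mkQ _) :=
  ⟨Coinduced.unit_injective X, Submodule.mkQ_surjective _, (Submodule.ker_mkQ _).symm⟩

namespace Cosyzygy

variable {X Y : ModuleCat.{u} A}

theorem exists_apply_one_eq_zero_and_mkQ_eq (c : Cosyzygy k X) :
    ∃ h : Coinduced k A X, h 1 = 0 ∧ Submodule.mkQ _ h = c := by
  obtain ⟨h, rfl⟩ := Submodule.mkQ_surjective _ c
  refine ⟨h - Coinduced.unit k X (h 1), ?_, ?_⟩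
  · simp
  · rw [map_sub, sub_eq_self]
    simp

theorem eq_zero_of_mkQ_eq_zero {h : Coinduced k A X} (h₁ : h 1 = 0)
    (H : Submodule.mkQ (LinearMap.range (Coinduced.unit k X)) h = 0) : h = 0 := by
  obtain ⟨x, rfl⟩ : h ∈ LinearMap.range (Coinduced.unit k X) := by simpa using H
  have hx : x = 0 := by simpa using h₁
  rw [hx, map_zero]

/-- The map induced on cosyzygies. -/
noncomputable def map (f : X →ₗ[A] Y) : Cosyzygy k X →ₗ[A] Cosyzygy k Y :=
  Submodule.mapQ _ _ (Coinduced.map (f.restrictScalars k)) <| by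
    rintro _ ⟨x, rfl⟩
    exact ⟨f x, Coinduced.ext fun b ↦ (map_smul f b x).symm⟩

end Cosyzygy

variable (k) in
/-- The cosyzygy as an endofunctor of the category of modules. -/
noncomputable def cosyzygyFunctor : ModuleCat.{u} A ⥤ ModuleCat.{u} A where
  obj X := ModuleCat.of A (Cosyzygy k X)
  map f := ModuleCat.ofHom (Cosyzygy.map f.hom)
  map_id _ := ModuleCat.hom_ext (Submodule.linearMap_qext _ rfl)
  map_comp _ _ := ModuleCat.hom_ext (Submodule.linearMap_qext _ rfl)

instance : (cosyzygyFunctor k (A := A)).Additive where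
  map_add := ModuleCat.hom_ext (Submodule.linearMap_qext _ rfl)

/-- On representatives vanishing at `1` the cosyzygy is the functor `Hom_k(A / k, -)`, which is
exact because `k` is a field. -/
theorem cosyzygyFunctor_shortExact (S : ShortComplex (ModuleCat.{u} A)) (hS : S.ShortExact) :
    (S.map (cosyzygyFunctor k)).ShortExact := by
  obtain ⟨hf, hg, h⟩ := ses_iff_shortExact.mpr hS
  obtain ⟨t, ht⟩ := (S.f.hom.restrictScalars k).exists_leftInverse_of_injective
    (LinearMap.ker_eq_bot.mpr hf)
  obtain ⟨s, hs⟩ := (S.g.hom.restrictScalars k).exists_rightInverse_of_surjective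
    (LinearMap.range_eq_top.mpr hg)
  refine ses_iff_shortExact.mp ⟨?_, ?_, le_antisymm ?_ ?_⟩
  · refine (injective_iff_map_eq_zero (S.map (cosyzygyFunctor k)).f.hom).mpr fun c hc ↦ ?_
    obtain ⟨φ, hφ, rfl⟩ := Cosyzygy.exists_apply_one_eq_zero_and_mkQ_eq c
    have := Cosyzygy.eq_zero_of_mkQ_eq_zero (by simp [hφ]) hc
    have hφ0 : φ = 0 := Coinduced.ext fun b ↦
      hf <| (DFunLike.congr_fun this b).trans (map_zero S.f.hom).symm
    exact (congrArg (Submodule.mkQ _) hφ0).trans (map_zero _)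
  · intro c
    obtain ⟨φ, rfl⟩ := Submodule.mkQ_surjective _ c
    exact ⟨Submodule.mkQ _ (Coinduced.map s φ),
      congrArg (Submodule.mkQ _) (Coinduced.ext fun b ↦ LinearMap.congr_fun hs (φ b))⟩
  · rw [LinearMap.range_le_ker_iff]
    exact ModuleCat.hom_ext_iff.mp (S.map (cosyzygyFunctor k)).zero
  · intro c hc
    obtain ⟨φ, hφ, rfl⟩ := Cosyzygy.exists_apply_one_eq_zero_and_mkQ_eq c
    have := Cosyzygy.eq_zero_of_mkQ_eq_zero (by simp [hφ]) hc
    refine ⟨Submodule.mkQ _ (Coinduced.map t φ),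
      congrArg (Submodule.mkQ _) (Coinduced.ext fun b ↦ ?_)⟩
    obtain ⟨x, hx⟩ : φ b ∈ LinearMap.range S.f.hom := by
      rw [h]
      exact DFunLike.congr_fun this b
    have htx : t (φ b) = x := by
      rw [← hx]
      exact LinearMap.congr_fun ht x
    exact (congrArg S.f.hom htx).trans hx

theorem exists_comp_eq_of_ker_le_ker {P X C : Type u} [AddCommGroup P] [Module A P]
    [AddCommGroup X] [Module A X] [AddCommGroup C] [Module A C] {g : P →ₗ[A] X}
    (hg : Function.Surjective g) {θ : P →ₗ[A] C} (h : LinearMap.ker g ≤ LinearMap.ker θ) :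
    ∃ ψ : X →ₗ[A] C, ψ ∘ₗ g = θ := by
  refine ⟨(LinearMap.ker g).liftQ θ h ∘ₗ (g.quotKerEquivOfSurjective hg).symm, ?_⟩
  ext p
  have hp : (g.quotKerEquivOfSurjective hg).symm (g p) = Submodule.Quotient.mk p :=
    (LinearEquiv.symm_apply_eq _).mpr rfl
  simp [hp]

/-- The pushout of `0 → K → P → X → 0` along `K → G`: its middle term splits because `K → G`
extends to `P`. -/
theorem SES.exists_ses_prod {K P X G C : ModuleCat.{u} A} {f : K →ₗ[A] P} {g : P →ₗ[A] X}
    {η : K →ₗ[A] G} {π : G →ₗ[A] C} (hηπ : SES A η π) (hg : Function.Surjective g)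
    (hex : LinearMap.range f = LinearMap.ker g) (φ : P →ₗ[A] G) (hφ : φ ∘ₗ f = η) :
    ∃ (α : P →ₗ[A] X × G) (β : X × G →ₗ[A] C), SES A (Y := ModuleCat.of A (X × G)) α β := by
  obtain ⟨hη, hπ, hex'⟩ := hηπ
  have hη_apply (x : K) : φ (f x) = η x := LinearMap.congr_fun hφ x
  have hπη (x : K) : π (η x) = 0 := hex'.le ⟨x, rfl⟩
  have hker : LinearMap.ker g ≤ LinearMap.ker (π ∘ₗ φ) := by
    rw [← hex]
    rintro _ ⟨x, rfl⟩
    simp [hη_apply, hπη]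
  obtain ⟨ψ, hψ⟩ := exists_comp_eq_of_ker_le_ker hg hker
  have hψ_apply (p : P) : ψ (g p) = π (φ p) := LinearMap.congr_fun hψ p
  refine ⟨g.prod φ, π ∘ₗ .snd A X G - ψ ∘ₗ .fst A X G, ?_, fun c ↦ ?_, le_antisymm ?_ ?_⟩
  · refine (injective_iff_map_eq_zero (g.prod φ)).mpr fun p hp ↦ ?_
    obtain ⟨hgp, hφp⟩ := Prod.mk_eq_zero.mp hp
    obtain ⟨x, rfl⟩ := hex.ge hgp
    rw [hη_apply] at hφp
    rw [(injective_iff_map_eq_zero η).mp hη x hφp, map_zero]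
  · obtain ⟨y, rfl⟩ := hπ c
    exact ⟨(0, y), by simp⟩
  · rintro _ ⟨p, rfl⟩
    simp [hψ_apply]
  · rintro ⟨x, y⟩ hxy
    obtain ⟨p, rfl⟩ := hg x
    obtain ⟨z, hz⟩ := hex'.ge (show π (y - φ p) = 0 by simpa [hψ_apply] using hxy)
    have hgf : g (f z) = 0 := hex.le ⟨z, rfl⟩
    exact ⟨p + f z, Prod.ext (by simp [hgf]) (by simp [hη_apply, hz])⟩

theorem mem_bracket_succ_of_isSyzygyStep {U X K : ModuleCat.{u} A} {n : ℕ}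
    (hXK : IsSyzygyStep A X K) (hK : K ∈ bracket A U n) :
    X ∈ bracket A (ModuleCat.of A (Cosyzygy k U × A)) (n + 1) := by
  obtain ⟨P, _, _, f, g, h⟩ := hXK
  obtain ⟨t, ht⟩ := (f.restrictScalars k).exists_leftInverse_of_injective
    (LinearMap.ker_eq_bot.mpr h.1)
  obtain ⟨α, β, hαβ⟩ := (ses_unit_mkQ (k := k) K).exists_ses_prod h.2.1 h.2.2 (Coinduced.lift t) <|
    LinearMap.ext fun x ↦ Coinduced.ext fun b ↦
      (congrArg t (map_smul f b x)).symm.trans (LinearMap.congr_fun ht (b • x))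
  exact mem_bullet_iff.mpr ⟨_, P, _, ⟨retractProdLeft X (.of A (Coinduced k A K))⟩,
    memAdd_self.mono (retractProdRight (.of A (Cosyzygy k U)) (.of A A)),
    bracket_mono (retractProdLeft (.of A (Cosyzygy k U)) (.of A A)) n
      (bracket_map cosyzygyFunctor_shortExact hK), α, β, hαβ⟩

/-- The `l`-fold cosyzygy functor undoes the syzygies up to projectives. -/
theorem exists_mem_bracket_of_isNthSyzygy [Module.Finite k A] (l : ℕ) (U : ModuleCat.{u} A)
    [Module.Finite A U] : ∃ V : ModuleCat.{u} A, Module.Finite A V ∧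
      ∀ (n : ℕ) (X K : ModuleCat.{u} A), IsNthSyzygy A l X K → K ∈ bracket A U n →
        X ∈ bracket A V (n + l) := by
  induction l with
  | zero => exact ⟨U, ‹_›, fun n X K ⟨e⟩ hK ↦ bracket_of_retract (retractOfEquiv e.symm) hK⟩
  | succ l ih =>
    obtain ⟨V, hV, h⟩ := ih
    have : Module.Finite k V := .trans A V
    exact ⟨ModuleCat.of A (Cosyzygy k V × A), inferInstanceAs (Module.Finite A (Cosyzygy k V × A)),
      fun n X K ⟨K₁, hXK₁, hK₁⟩ hK ↦ mem_bracket_succ_of_isSyzygyStep hXK₁ (h n K₁ K hK₁ hK)⟩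

end Cosyzygy

section BalancedTensor

open scoped TensorProduct
open MulOpposite (op unop)

/-- The tensor product `X ⊗_R Y` of a right module and a left module over a noncommutative ring, as
an abelian group: the quotient of `X ⊗ Y` by the balancing relations. -/
def BalancedTensor (R X Y : Type u) [Ring R] [AddCommGroup X] [AddCommGroup Y] [Module Rᵐᵒᵖ X]
    [Module R Y] : Type u :=
  (X ⊗[ℤ] Y) ⧸ AddSubgroup.closure
    {t : X ⊗[ℤ] Y | ∃ (r : R) (x : X) (y : Y), t = (op r • x) ⊗ₜ[ℤ] y - x ⊗ₜ[ℤ] (r • y)}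

namespace BalancedTensor

section Basic

variable {R X X' Y Y' T : Type u} [Ring R]
  [AddCommGroup X] [AddCommGroup X'] [AddCommGroup Y] [AddCommGroup Y'] [AddCommGroup T]
  [Module Rᵐᵒᵖ X] [Module Rᵐᵒᵖ X'] [Module R Y] [Module R Y']

noncomputable instance : AddCommGroup (BalancedTensor R X Y) :=
  inferInstanceAs (AddCommGroup (_ ⧸ _))

variable (R) in
/-- The universal balanced map, sending `x` and `y` to the class of `x ⊗ y`. -/
noncomputable def tmul (x : X) (y : Y) : BalancedTensor R X Y :=
  QuotientAddGroup.mk (x ⊗ₜ[ℤ] y)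

theorem tmul_add (x : X) (y y' : Y) : tmul R x (y + y') = tmul R x y + tmul R x y' :=
  congrArg QuotientAddGroup.mk (TensorProduct.tmul_add x y y')

theorem add_tmul (x x' : X) (y : Y) : tmul R (x + x') y = tmul R x y + tmul R x' y :=
  congrArg QuotientAddGroup.mk (TensorProduct.add_tmul x x' y)

theorem tmul_zero (x : X) : tmul R x (0 : Y) = 0 := by simpa using tmul_add x (0 : Y) 0

theorem zero_tmul (y : Y) : tmul R (0 : X) y = 0 := by simpa using add_tmul (0 : X) 0 y

theorem sum_tmul {ι : Type*} (s : Finset ι) (x : ι → X) (y : Y) :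
    tmul R (∑ i ∈ s, x i) y = ∑ i ∈ s, tmul R (x i) y :=
  map_sum (AddMonoidHom.mk' (tmul R · y) fun x x' ↦ add_tmul x x' y) x s

theorem tmul_sum {ι : Type*} (s : Finset ι) (x : X) (y : ι → Y) :
    tmul R x (∑ i ∈ s, y i) = ∑ i ∈ s, tmul R x (y i) :=
  map_sum (AddMonoidHom.mk' (tmul R x) (tmul_add x)) y s

theorem op_smul_tmul (r : R) (x : X) (y : Y) : tmul R (op r • x) y = tmul R x (r • y) :=
  QuotientAddGroup.eq_iff_sub_mem.mpr (AddSubgroup.subset_closure ⟨r, x, y, rfl⟩)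

/-- The additive map out of `X ⊗_R Y` induced by a balanced biadditive map. -/
noncomputable def lift (β : X → Y → T) (hβ : IsBalancedBiadd R β) : BalancedTensor R X Y →+ T :=
  QuotientAddGroup.lift _
    (TensorProduct.liftAddHom
      (.mk' (fun x ↦ .mk' (β x) (hβ.2.1 x)) fun x x' ↦ AddMonoidHom.ext (hβ.1 x x'))
      fun n x y ↦ by rw [map_zsmul, map_zsmul, AddMonoidHom.zsmul_apply]) <| by
    rw [AddSubgroup.closure_le]
    rintro _ ⟨r, x, y, rfl⟩
    simp [hβ.2.2]

@[elab_as_elim]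
theorem induction_on {p : BalancedTensor R X Y → Prop} (t : BalancedTensor R X Y) (zero : p 0)
    (tmul : ∀ x y, p (tmul R x y)) (add : ∀ t t', p t → p t' → p (t + t')) : p t := by
  obtain ⟨t, rfl⟩ := QuotientAddGroup.mk_surjective t
  induction t with
  | zero => exact zero
  | tmul x y => exact tmul x y
  | add t t' ht ht' => exact add _ _ ht ht'

@[ext]
theorem hom_ext {f g : BalancedTensor R X Y →+ T} (h : ∀ x y, f (tmul R x y) = g (tmul R x y)) :
    f = g := by
  ext t
  induction t using induction_on with
  | zero => simp only [map_zero]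
  | tmul x y => exact h x y
  | add t t' ht ht' => simp only [map_add, ht, ht']

theorem isTensorProductOver_tmul :
    IsTensorProductOver R (tmul R : X → Y → BalancedTensor R X Y) :=
  ⟨⟨add_tmul, tmul_add, op_smul_tmul⟩, fun _ _ β hβ ↦
    ⟨lift β hβ, fun _ _ ↦ rfl, fun _ hφ ↦ hom_ext hφ⟩⟩

/-- The additive map `X ⊗_R Y → X' ⊗_R Y'` induced by linear maps in both variables. -/
noncomputable def map (f : X →ₗ[Rᵐᵒᵖ] X') (g : Y →ₗ[R] Y') :
    BalancedTensor R X Y →+ BalancedTensor R X' Y' :=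
  lift (fun x y ↦ tmul R (f x) (g y))
    ⟨fun x x' y ↦ by simp only [map_add, add_tmul], fun x y y' ↦ by simp only [map_add, tmul_add],
      fun r x y ↦ by simp only [map_smul, op_smul_tmul]⟩

@[simp]
theorem map_tmul (f : X →ₗ[Rᵐᵒᵖ] X') (g : Y →ₗ[R] Y') (x : X) (y : Y) :
    map f g (tmul R x y) = tmul R (f x) (g y) := rfl

theorem map_id : map (.id : X →ₗ[Rᵐᵒᵖ] X) (.id : Y →ₗ[R] Y) = .id _ :=
  hom_ext fun _ _ ↦ rfl

theorem map_comp_left {X'' : Type u} [AddCommGroup X''] [Module Rᵐᵒᵖ X''] (f' : X' →ₗ[Rᵐᵒᵖ] X'')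
    (f : X →ₗ[Rᵐᵒᵖ] X') :
    map (f' ∘ₗ f) (.id : Y →ₗ[R] Y) = (map f' .id).comp (map f .id) :=
  hom_ext fun _ _ ↦ rfl

theorem map_add_left (f f' : X →ₗ[Rᵐᵒᵖ] X') (g : Y →ₗ[R] Y') :
    map (f + f') g = map f g + map f' g :=
  hom_ext fun x y ↦ add_tmul (f x) (f' x) (g y)

theorem map_add_right (f : X →ₗ[Rᵐᵒᵖ] X') (g g' : Y →ₗ[R] Y') :
    map f (g + g') = map f g + map f g' :=
  hom_ext fun x y ↦ tmul_add (f x) (g y) (g' y)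

end Basic

section Action

variable {R X Y : Type u} [Ring R] [AddCommGroup X] [AddCommGroup Y] [Module Rᵐᵒᵖ X] [Module R Y]

variable (R X Y) in
/-- Endomorphisms of the left factor act on `X ⊗_R Y`. -/
noncomputable def endLeft : Module.End Rᵐᵒᵖ X →+* AddMonoid.End (BalancedTensor R X Y) :=
  .mk' { toFun f := map f .id
         map_one' := hom_ext fun _ _ ↦ rfl
         map_mul' _ _ := hom_ext fun _ _ ↦ rfl } fun f g ↦ map_add_left f g .id

variable (R X Y) in
/-- Endomorphisms of the right factor act on `X ⊗_R Y`. -/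
noncomputable def endRight : Module.End R Y →+* AddMonoid.End (BalancedTensor R X Y) :=
  .mk' { toFun := map .id
         map_one' := hom_ext fun _ _ ↦ rfl
         map_mul' _ _ := hom_ext fun _ _ ↦ rfl } (map_add_right .id)

section Left

variable {S : Type u} [Ring S] [Module S X] [SMulCommClass S Rᵐᵒᵖ X]

noncomputable instance : Module S (BalancedTensor R X Y) :=
  Module.compHom _ ((endLeft R X Y).comp (Module.toModuleEnd Rᵐᵒᵖ X))

theorem smul_tmul (s : S) (x : X) (y : Y) : s • tmul R x y = tmul R (s • x) y := rfl

/-- Additive maps out of `X ⊗_R Y` that respect the left action on pure tensors are linear. -/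
noncomputable def toLinearMap {T : Type u} [AddCommGroup T] [Module S T]
    (φ : BalancedTensor R X Y →+ T)
    (hφ : ∀ (s : S) x y, φ (tmul R (s • x) y) = s • φ (tmul R x y)) :
    BalancedTensor R X Y →ₗ[S] T where
  __ := φ
  map_smul' s := DFunLike.congr_fun <| hom_ext (f := φ.comp (DistribSMul.toAddMonoidHom _ s))
    (g := (DistribSMul.toAddMonoidHom _ s).comp φ) (hφ s)

/-- The isomorphism `X ⊗_R Y ≃ X' ⊗_R Y` induced by an isomorphism of bimodules `X ≃ X'`. -/
noncomputable def congrLeft {X' : Type u} [AddCommGroup X'] [Module Rᵐᵒᵖ X'] [Module S X']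
    [SMulCommClass S Rᵐᵒᵖ X'] (e : X ≃ₗ[Rᵐᵒᵖ] X') (he : ∀ (s : S) (x : X), e (s • x) = s • e x) :
    BalancedTensor R X Y ≃ₗ[S] BalancedTensor R X' Y where
  __ := toLinearMap (map e.toLinearMap .id) fun s x y ↦ congrArg (tmul R · y) (he s x)
  invFun := map e.symm.toLinearMap .id
  left_inv := DFunLike.congr_fun <| hom_ext
    (f := (map e.symm.toLinearMap .id).comp (map e.toLinearMap .id)) (g := .id _)
    fun x y ↦ congrArg (tmul R · y) (e.symm_apply_apply x)
  right_inv := DFunLike.congr_fun <| hom_ext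
    (f := (map e.toLinearMap .id).comp (map e.symm.toLinearMap .id)) (g := .id _)
    fun x y ↦ congrArg (tmul R · y) (e.apply_symm_apply x)

/-- The linear map `x ↦ x ⊗ y`. -/
noncomputable def mkLeft (y : Y) : X →ₗ[S] BalancedTensor R X Y where
  toFun x := tmul R x y
  map_add' x x' := add_tmul x x' y
  map_smul' _ _ := rfl

@[simp]
theorem mkLeft_apply (x : X) (y : Y) : mkLeft (S := S) y x = tmul R x y := rfl

instance [Module.Finite S X] [Module.Finite R Y] : Module.Finite S (BalancedTensor R X Y) := by
  obtain ⟨n, g, hg⟩ := Module.Finite.exists_fin' R Y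
  let φ : (Fin n → X) →ₗ[S] BalancedTensor R X Y :=
    ∑ j, mkLeft (g (Pi.single j 1)) ∘ₗ .proj j
  refine .of_surjective φ fun t ↦ ?_
  induction t using induction_on with
  | zero => exact ⟨0, map_zero φ⟩
  | tmul x y =>
    obtain ⟨c, rfl⟩ := hg y
    refine ⟨fun j ↦ op (c j) • x, ?_⟩
    calc φ (fun j ↦ op (c j) • x) = ∑ j, tmul R x (g (c j • Pi.single j 1)) := by
          simp [φ, op_smul_tmul]
      _ = tmul R x (g c) := by rw [← tmul_sum, ← map_sum, ← pi_eq_sum_univ' c]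
  | add t t' ht ht' =>
    obtain ⟨⟨a, rfl⟩, ⟨b, rfl⟩⟩ := And.intro ht ht'
    exact ⟨a + b, map_add φ a b⟩

end Left

section Right

variable {S : Type u} [Ring S] [Module Sᵐᵒᵖ Y] [SMulCommClass R Sᵐᵒᵖ Y]

noncomputable instance : Module Sᵐᵒᵖ (BalancedTensor R X Y) :=
  have : SMulCommClass Sᵐᵒᵖ R Y := .symm _ _ _
  Module.compHom _ ((endRight R X Y).comp (Module.toModuleEnd R Y))

theorem op_smul_tmul_right (s : Sᵐᵒᵖ) (x : X) (y : Y) : s • tmul R x y = tmul R x (s • y) := rfl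

/-- The linear map `y ↦ x ⊗ y`. -/
noncomputable def mkRight (x : X) : Y →ₗ[Sᵐᵒᵖ] BalancedTensor R X Y where
  toFun := tmul R x
  map_add' := tmul_add x
  map_smul' _ _ := rfl

end Right

instance {S S' : Type u} [Ring S] [Module S X] [SMulCommClass S Rᵐᵒᵖ X] [Ring S'] [Module S'ᵐᵒᵖ Y]
    [SMulCommClass R S'ᵐᵒᵖ Y] : SMulCommClass S S'ᵐᵒᵖ (BalancedTensor R X Y) where
  smul_comm s s' t := by
    induction t using induction_on with
    | zero => simp only [smul_zero]
    | tmul x y => rfl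
    | add t t' ht ht' => simp only [smul_add, ht, ht']

section Central

variable {k : Type u} [CommRing k] [Algebra k R] [Module k X] [IsScalarTower k Rᵐᵒᵖ X]

theorem tmul_smul_eq_smul_tmul [Module k Y] [IsScalarTower k R Y] (c : k) (x : X) (y : Y) :
    tmul R x (c • y) = c • tmul R x y := by
  rw [← algebraMap_smul R c y, ← op_smul_tmul, smul_tmul, ← algebraMap_smul Rᵐᵒᵖ c x]
  rfl

instance {S : Type u} [Ring S] [Algebra k S] [Module S X] [SMulCommClass S Rᵐᵒᵖ X]
    [IsScalarTower k S X] : IsScalarTower k S (BalancedTensor R X Y) where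
  smul_assoc c s t := by
    induction t using induction_on with
    | zero => simp only [smul_zero]
    | tmul x y => simp only [smul_tmul, smul_assoc]
    | add t t' ht ht' => simp only [smul_add, ht, ht']

instance {S : Type u} [Ring S] [Algebra k S] [Module k Y] [IsScalarTower k R Y] [Module Sᵐᵒᵖ Y]
    [SMulCommClass R Sᵐᵒᵖ Y] [IsScalarTower k Sᵐᵒᵖ Y] :
    IsScalarTower k Sᵐᵒᵖ (BalancedTensor R X Y) where
  smul_assoc c s t := by
    induction t using induction_on with
    | zero => simp only [smul_zero]
    | tmul x y => simp only [op_smul_tmul_right, smul_assoc, tmul_smul_eq_smul_tmul]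
    | add t t' ht ht' => simp only [smul_add, ht, ht']

end Central

end Action

section Assoc

variable {R S T L M N : Type u} [Ring R] [Ring S] [Ring T]
  [AddCommGroup L] [AddCommGroup M] [AddCommGroup N]
  [Module T L] [Module Sᵐᵒᵖ L] [SMulCommClass T Sᵐᵒᵖ L]
  [Module S M] [Module Rᵐᵒᵖ M] [SMulCommClass S Rᵐᵒᵖ M] [Module R N]

theorem hom_ext_left {G : Type u} [AddCommGroup G]
    {f g : BalancedTensor R (BalancedTensor S L M) N →+ G}
    (h : ∀ x y z, f (tmul R (tmul S x y) z) = g (tmul R (tmul S x y) z)) : f = g := by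
  ext t z
  induction t using induction_on with
  | zero => simp only [zero_tmul, map_zero]
  | tmul x y => exact h x y z
  | add t t' ht ht' => simp only [add_tmul, map_add, ht, ht']

theorem hom_ext_right {G : Type u} [AddCommGroup G]
    {f g : BalancedTensor S L (BalancedTensor R M N) →+ G}
    (h : ∀ x y z, f (tmul S x (tmul R y z)) = g (tmul S x (tmul R y z))) : f = g := by
  ext x t
  induction t using induction_on with
  | zero => simp only [tmul_zero, map_zero]
  | tmul y z => exact h x y z
  | add t t' ht ht' => simp only [tmul_add, map_add, ht, ht']

theorem isBalancedBiadd_map_mkLeft : IsBalancedBiadd R fun (t : BalancedTensor S L M) (z : N) ↦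
    (map .id (mkLeft z) t : BalancedTensor S L (BalancedTensor R M N)) := by
  refine ⟨fun t t' z ↦ map_add _ t t', fun t z z' ↦ ?_, fun r t z ↦ ?_⟩
  · have : mkLeft (z + z') = (mkLeft z + mkLeft z' : M →ₗ[S] BalancedTensor R M N) :=
      LinearMap.ext fun y ↦ tmul_add y z z'
    simp only [this, map_add_right]
    rfl
  · induction t using induction_on with
    | zero => simp only [smul_zero, map_zero]
    | tmul x y => exact congrArg (tmul S x) (op_smul_tmul r y z)
    | add t t' ht ht' => simp only [smul_add, map_add, ht, ht']

theorem isBalancedBiadd_map_mkRight : IsBalancedBiadd S fun (x : L) (t : BalancedTensor R M N) ↦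
    (map (mkRight x) .id t : BalancedTensor R (BalancedTensor S L M) N) := by
  refine ⟨fun x x' t ↦ ?_, fun x t t' ↦ map_add _ t t', fun s x t ↦ ?_⟩
  · have : mkRight (x + x') = (mkRight x + mkRight x' : M →ₗ[Rᵐᵒᵖ] BalancedTensor S L M) :=
      LinearMap.ext fun y ↦ add_tmul x x' y
    simp only [this, map_add_left]
    rfl
  · induction t using induction_on with
    | zero => simp only [smul_zero, map_zero]
    | tmul y z => exact congrArg (tmul R · z) (op_smul_tmul s x y)
    | add t t' ht ht' => simp only [smul_add, map_add, ht, ht']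

variable (R S T L M N) in
/-- Associativity of the balanced tensor product. -/
noncomputable def assoc : BalancedTensor R (BalancedTensor S L M) N ≃ₗ[T]
    BalancedTensor S L (BalancedTensor R M N) :=
  let φ := lift _ (isBalancedBiadd_map_mkLeft (R := R) (S := S) (L := L) (M := M) (N := N))
  let ψ := lift _ (isBalancedBiadd_map_mkRight (R := R) (S := S) (L := L) (M := M) (N := N))
  { toLinearMap φ fun s t z ↦
      (toLinearMap (map (.id : L →ₗ[Sᵐᵒᵖ] L) (mkLeft z)) fun _ _ _ ↦ rfl).map_smul s t with
    invFun := ψ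
    left_inv := DFunLike.congr_fun <|
      hom_ext_left (f := ψ.comp φ) (g := .id _) fun _ _ _ ↦ rfl
    right_inv := DFunLike.congr_fun <|
      hom_ext_right (f := φ.comp ψ) (g := .id _) fun _ _ _ ↦ rfl }

end Assoc

section Unit

variable {R X : Type u} [Ring R] [AddCommGroup X] [Module R X]

variable (R X) in
/-- The unit isomorphism `R ⊗_R X ≃ X`. -/
noncomputable def lid : BalancedTensor R R X ≃ₗ[R] X :=
  .ofLinearMap
    (toLinearMap (lift (fun (r : R) (x : X) ↦ r • x)
      ⟨add_smul, smul_add, fun r s x ↦ mul_smul s r x⟩) mul_smul)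
    { toFun := tmul R 1
      map_add' := tmul_add 1
      map_smul' r x := (op_smul_tmul r 1 x).symm.trans (by simp [smul_tmul]) }
    (LinearMap.ext (one_smul R))
    (LinearMap.toAddMonoidHom_injective <| hom_ext fun r x ↦
      (op_smul_tmul r 1 x).symm.trans (by simp))

end Unit

section Exact

variable {R X : Type u} [Ring R] [AddCommGroup X] [Module Rᵐᵒᵖ X]

/-- The contraction `x ⊗ y ↦ φ x • y` with a linear form `φ` on the right module `X`. -/
noncomputable def contract {Y : Type u} [AddCommGroup Y] [Module R Y] (φ : X →ₗ[Rᵐᵒᵖ] Rᵐᵒᵖ) :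
    BalancedTensor R X Y →+ Y :=
  lift (fun x y ↦ unop (φ x) • y) ⟨fun x x' y ↦ by simp [add_smul], fun x ↦ smul_add _,
    fun r x y ↦ by simp [mul_smul]⟩

theorem contract_map {Y Y' : Type u} [AddCommGroup Y] [Module R Y] [AddCommGroup Y'] [Module R Y']
    (φ : X →ₗ[Rᵐᵒᵖ] Rᵐᵒᵖ) (g : Y →ₗ[R] Y') (t : BalancedTensor R X Y) :
    contract φ (map .id g t) = g (contract φ t) :=
  DFunLike.congr_fun (hom_ext (f := (contract φ).comp (map .id g))
    (g := g.toAddMonoidHom.comp (contract φ)) fun x y ↦ (map_smul g (unop (φ x)) y).symm) t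

/-- A dual basis of the finitely generated projective right module `X` expands every element of
`X ⊗_R Y` over finitely many copies of `Y`. -/
theorem exists_eq_sum_tmul_contract [Module.Finite Rᵐᵒᵖ X] [Module.Projective Rᵐᵒᵖ X] :
    ∃ (n : ℕ) (e : Fin n → X) (φ : Fin n → X →ₗ[Rᵐᵒᵖ] Rᵐᵒᵖ),
      ∀ (Y : Type u) [AddCommGroup Y] [Module R Y] (t : BalancedTensor R X Y),
        t = ∑ j, tmul R (e j) (contract (φ j) t) := by
  obtain ⟨n, f, g, -, -, hfg⟩ := Module.Finite.exists_comp_eq_id_of_projective Rᵐᵒᵖ X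
  refine ⟨n, fun j ↦ f (Pi.single j 1), fun j ↦ .proj j ∘ₗ g, fun Y _ _ t ↦ ?_⟩
  induction t using induction_on with
  | zero => simp [tmul_zero]
  | tmul x y =>
    calc tmul R x y = tmul R (f (g x)) y := by rw [← LinearMap.comp_apply, hfg, LinearMap.id_apply]
      _ = ∑ j, tmul R (f (g x j • Pi.single j 1)) y := by
        rw [← sum_tmul, ← map_sum, ← pi_eq_sum_univ' (g x)]
      _ = ∑ j, tmul R (f (Pi.single j 1)) (unop (g x j) • y) := by
        simp only [map_smul, ← op_smul_tmul, MulOpposite.op_unop]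
  | add t t' ht ht' => simp only [map_add, tmul_add, Finset.sum_add_distrib, ← ht, ← ht']

variable (S : Type u) [Ring S] [Module S X] [SMulCommClass S Rᵐᵒᵖ X]

variable (R X) in
/-- The functor `X ⊗_R -` given by an `S`-`R`-bimodule `X`. -/
noncomputable def tensorFunctor : ModuleCat.{u} R ⥤ ModuleCat.{u} S where
  obj Y := ModuleCat.of S (BalancedTensor R X Y)
  map g := ModuleCat.ofHom (toLinearMap (map .id g.hom) fun _ _ _ ↦ rfl)
  map_id _ := ModuleCat.hom_ext (LinearMap.toAddMonoidHom_injective (hom_ext fun _ _ ↦ rfl))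
  map_comp _ _ := ModuleCat.hom_ext (LinearMap.toAddMonoidHom_injective (hom_ext fun _ _ ↦ rfl))

instance : (tensorFunctor R X S).Additive where
  map_add := ModuleCat.hom_ext <| LinearMap.toAddMonoidHom_injective <|
    map_add_right (.id : X →ₗ[Rᵐᵒᵖ] X) _ _

theorem tensorFunctor_shortExact [Module.Finite Rᵐᵒᵖ X] [Module.Projective Rᵐᵒᵖ X]
    (T : ShortComplex (ModuleCat.{u} R)) (hT : T.ShortExact) :
    (T.map (tensorFunctor R X S)).ShortExact := by
  obtain ⟨hf, hg, h⟩ := ses_iff_shortExact.mpr hT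
  obtain ⟨n, e, φ, he⟩ := exists_eq_sum_tmul_contract (R := R) (X := X)
  refine ses_iff_shortExact.mp ⟨(injective_iff_map_eq_zero _).mpr fun t ht ↦ ?_, fun t ↦ ?_,
    le_antisymm ?_ fun t ht ↦ ?_⟩
  · have ht' (j) : contract (φ j) t = 0 := (map_eq_zero_iff T.f.hom hf).mp <|
      (contract_map (φ j) T.f.hom t).symm.trans ((congrArg _ ht).trans (map_zero _))
    exact (he T.X₁ t).trans (Finset.sum_eq_zero fun j _ ↦ by rw [ht', tmul_zero])
  · choose y hy using fun j ↦ hg (contract (φ j) t)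
    refine ⟨∑ j, tmul R (e j) (y j), (map_sum (map .id T.g.hom) _ _).trans ?_⟩
    rw [he T.X₃ t]
    simp [hy]
  · rw [LinearMap.range_le_ker_iff]
    exact ModuleCat.hom_ext_iff.mp (T.map (tensorFunctor R X S)).zero
  · have ht' (j) : contract (φ j) t ∈ LinearMap.range T.f.hom := h.ge <|
      (contract_map (φ j) T.g.hom t).symm.trans ((congrArg _ ht).trans (map_zero _))
    choose y hy using ht'
    refine ⟨∑ j, tmul R (e j) (y j), (map_sum (map .id T.f.hom) _ _).trans ?_⟩
    rw [he T.X₂ t]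
    simp [hy]

end Exact

end BalancedTensor

end BalancedTensor

section Bimodule

open scoped TensorProduct
open BalancedTensor

variable {k A : Type u} [CommRing k] [Ring A] [Algebra k A]

noncomputable instance (W : ModuleCat.{u} (A ⊗[k] Aᵐᵒᵖ)) : Module A W :=
  Module.compHom W (Algebra.TensorProduct.includeLeft : A →ₐ[k] A ⊗[k] Aᵐᵒᵖ).toRingHom

noncomputable instance (W : ModuleCat.{u} (A ⊗[k] Aᵐᵒᵖ)) : Module Aᵐᵒᵖ W :=
  Module.compHom W (Algebra.TensorProduct.includeRight : Aᵐᵒᵖ →ₐ[k] A ⊗[k] Aᵐᵒᵖ).toRingHom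

variable {W W' : ModuleCat.{u} (A ⊗[k] Aᵐᵒᵖ)}

theorem bimodule_smul_def (a : A) (w : W) : a • w = (a ⊗ₜ[k] (1 : Aᵐᵒᵖ)) • w := rfl

theorem bimodule_op_smul_def (b : Aᵐᵒᵖ) (w : W) : b • w = ((1 : A) ⊗ₜ[k] b) • w := rfl

instance : SMulCommClass A Aᵐᵒᵖ W where
  smul_comm a b w := by simp [bimodule_smul_def, bimodule_op_smul_def, smul_smul]

/-- The map of right modules underlying a map of bimodules. -/
def rightLinear (f : W →ₗ[A ⊗[k] Aᵐᵒᵖ] W') : W →ₗ[Aᵐᵒᵖ] W' where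
  __ := f.toAddMonoidHom
  map_smul' b := map_smul f ((1 : A) ⊗ₜ[k] b)

/-- The functor forgetting the left action on bimodules. -/
noncomputable def toRightModule : ModuleCat.{u} (A ⊗[k] Aᵐᵒᵖ) ⥤ ModuleCat.{u} Aᵐᵒᵖ where
  obj W := ModuleCat.of Aᵐᵒᵖ W
  map f := ModuleCat.ofHom (rightLinear f.hom)

instance : (toRightModule (k := k) (A := A)).Additive where

/-- The functor `- ⊗_A X` from bimodules to left modules. -/
noncomputable def tensorRight (X : Type u) [AddCommGroup X] [Module A X] :
    ModuleCat.{u} (A ⊗[k] Aᵐᵒᵖ) ⥤ ModuleCat.{u} A where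
  obj W := ModuleCat.of A (BalancedTensor A W X)
  map f := ModuleCat.ofHom <| toLinearMap (map (rightLinear f.hom) .id) fun a w x ↦
    congrArg (tmul A · x) (map_smul f.hom (a ⊗ₜ[k] (1 : Aᵐᵒᵖ)) w)
  map_id _ := ModuleCat.hom_ext (LinearMap.toAddMonoidHom_injective (hom_ext fun _ _ ↦ rfl))
  map_comp _ _ := ModuleCat.hom_ext (LinearMap.toAddMonoidHom_injective (hom_ext fun _ _ ↦ rfl))

instance (X : Type u) [AddCommGroup X] [Module A X] :
    (tensorRight (k := k) (A := A) X).Additive where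
  map_add := ModuleCat.hom_ext <| LinearMap.toAddMonoidHom_injective <|
    map_add_left (rightLinear _) (rightLinear _) .id

section RankOne

theorem symm_smul_of_rankOne (e : (A ⊗[k] Aᵐᵒᵖ) ≃ₗ[A ⊗[k] Aᵐᵒᵖ] W) (a : A) (w : W) :
    e.symm (a • w) = (a ⊗ₜ 1) * e.symm w := by
  rw [bimodule_smul_def, map_smul, smul_eq_mul]

theorem symm_op_smul_of_rankOne (e : (A ⊗[k] Aᵐᵒᵖ) ≃ₗ[A ⊗[k] Aᵐᵒᵖ] W) (b : Aᵐᵒᵖ) (w : W) :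
    e.symm (b • w) = (1 ⊗ₜ b) * e.symm w := by
  rw [bimodule_op_smul_def, map_smul, smul_eq_mul]

/-- As a right module, the free bimodule of rank one is extended from the scalars `k`. -/
noncomputable def rightEquivOfRankOne (e : (A ⊗[k] Aᵐᵒᵖ) ≃ₗ[A ⊗[k] Aᵐᵒᵖ] W) :
    W ≃ₗ[Aᵐᵒᵖ] Aᵐᵒᵖ ⊗[k] A where
  __ := e.symm.toAddEquiv.trans (TensorProduct.comm k A Aᵐᵒᵖ).toAddEquiv
  map_smul' b w := by
    change TensorProduct.comm k A Aᵐᵒᵖ (e.symm (b • w)) =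
      b • TensorProduct.comm k A Aᵐᵒᵖ (e.symm w)
    rw [symm_op_smul_of_rankOne]
    induction e.symm w using TensorProduct.induction_on with
    | zero => simp
    | tmul a c => simp [TensorProduct.smul_tmul']
    | add t t' ht ht' => simp only [mul_add, map_add, smul_add, ht, ht']

theorem smul_tmul_rankOne {X : Type u} [AddCommGroup X] [Module A X]
    (e : (A ⊗[k] Aᵐᵒᵖ) ≃ₗ[A ⊗[k] Aᵐᵒᵖ] W) (a : A) (b : Aᵐᵒᵖ) (x : X) :
    a • tmul A (e 1) (b.unop • x) = tmul A (e (a ⊗ₜ b)) x := by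
  rw [← op_smul_tmul, MulOpposite.op_unop, smul_tmul, bimodule_smul_def, bimodule_op_smul_def,
    smul_smul, ← map_smul, smul_eq_mul, mul_one, Algebra.TensorProduct.tmul_mul_tmul, mul_one,
    one_mul]

variable {X : Type u} [AddCommGroup X] [Module A X] [Module k X] [IsScalarTower k A X]

theorem tmul_smul_rankOne (e : (A ⊗[k] Aᵐᵒᵖ) ≃ₗ[A ⊗[k] Aᵐᵒᵖ] W) (c : k) (x : X) :
    tmul A (e 1) (c • x) = algebraMap k A c • tmul A (e 1) x := by
  have hl := smul_tmul_rankOne e (algebraMap k A c) 1 x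
  have hr := smul_tmul_rankOne e 1 (algebraMap k Aᵐᵒᵖ c) x
  rw [← Algebra.TensorProduct.algebraMap_apply, Algebra.TensorProduct.algebraMap_apply', ← hr] at hl
  simpa using hl.symm

variable (k A X) in
/-- The action of the right factor of `A ⊗ Aᵐᵒᵖ` on `X`, as the map `x ↦ (a ⊗ b ↦ a ⊗ b x)`. -/
noncomputable def actRight : X →ₗ[k] (A ⊗[k] Aᵐᵒᵖ) →ₗ[k] A ⊗[k] X :=
  LinearMap.lTensorHom A ∘ₗ
    ((Algebra.lsmul k k X).toLinearMap ∘ₗ (MulOpposite.opLinearEquiv k).symm.toLinearMap).flip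

@[simp]
theorem actRight_tmul (x : X) (a : A) (b : Aᵐᵒᵖ) :
    actRight k A X x (a ⊗ₜ b) = a ⊗ₜ (b.unop • x) := rfl

theorem actRight_left_mul (x : X) (a : A) (t : A ⊗[k] Aᵐᵒᵖ) :
    actRight k A X x ((a ⊗ₜ 1) * t) = a • actRight k A X x t := by
  induction t using TensorProduct.induction_on with
  | zero => simp
  | tmul a c => simp [TensorProduct.smul_tmul']
  | add t t' ht ht' => simp only [mul_add, smul_add, map_add, ht, ht']

theorem actRight_right_mul (x : X) (r : A) (t : A ⊗[k] Aᵐᵒᵖ) :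
    actRight k A X x ((1 ⊗ₜ .op r) * t) = actRight k A X (r • x) t := by
  induction t using TensorProduct.induction_on with
  | zero => simp
  | tmul a c => simp [mul_smul]
  | add t t' ht ht' => simp only [mul_add, map_add, ht, ht']

theorem isBalancedBiadd_actRight (e : (A ⊗[k] Aᵐᵒᵖ) ≃ₗ[A ⊗[k] Aᵐᵒᵖ] W) :
    IsBalancedBiadd A fun (w : W) (x : X) ↦ actRight k A X x (e.symm w) :=
  ⟨by simp, by simp, fun r w x ↦ by simp only [symm_op_smul_of_rankOne, actRight_right_mul]⟩

/-- Tensoring the free bimodule of rank one with `X` gives the left module induced from the scalars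
`k`. -/
noncomputable def tensorEquivOfRankOne (e : (A ⊗[k] Aᵐᵒᵖ) ≃ₗ[A ⊗[k] Aᵐᵒᵖ] W) :
    BalancedTensor A W X ≃ₗ[A] A ⊗[k] X :=
  let _ : Module k (BalancedTensor A W X) := Module.compHom _ (algebraMap k A)
  have : IsScalarTower k A (BalancedTensor A W X) := .of_compHom k A _
  let φ : BalancedTensor A W X →ₗ[A] A ⊗[k] X :=
    toLinearMap (lift _ (isBalancedBiadd_actRight e)) fun a w x ↦
      (congrArg _ (symm_smul_of_rankOne e a w)).trans (actRight_left_mul x a _)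
  let ψ : X →ₗ[k] BalancedTensor A W X :=
    { toFun := tmul A (e 1)
      map_add' := tmul_add (e 1)
      map_smul' := tmul_smul_rankOne e }
  .ofLinearMap φ (TensorProduct.AlgebraTensorModule.lift (LinearMap.toSpanSingleton A _ ψ))
    (by
      ext x
      have hφψ : φ (ψ x) = 1 ⊗ₜ x := by
        change actRight k A X x (e.symm (e 1)) = 1 ⊗ₜ x
        simp [Algebra.TensorProduct.one_def]
      simpa using hφψ)
    (LinearMap.toAddMonoidHom_injective <| hom_ext fun w x ↦ by
      obtain ⟨t, rfl⟩ := e.surjective w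
      change TensorProduct.AlgebraTensorModule.lift (LinearMap.toSpanSingleton A _ ψ)
        (actRight k A X x (e.symm (e t))) = tmul A (e t) x
      rw [e.symm_apply_apply]
      induction t using TensorProduct.induction_on with
      | zero => simp only [map_zero, zero_tmul]
      | tmul a b => exact smul_tmul_rankOne e a b x
      | add t t' ht ht' => simp only [map_add, add_tmul, ht, ht'])

end RankOne

section Projective

theorem projective_op_of_rankOne [Module.Projective k A]
    (e : (A ⊗[k] Aᵐᵒᵖ) ≃ₗ[A ⊗[k] Aᵐᵒᵖ] W) : Module.Projective Aᵐᵒᵖ W :=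
  .of_equiv (rightEquivOfRankOne e).symm

theorem projective_op_of_projective [Module.Projective k A] [Module.Finite (A ⊗[k] Aᵐᵒᵖ) W]
    [Module.Projective (A ⊗[k] Aᵐᵒᵖ) W] : Module.Projective Aᵐᵒᵖ W := by
  let F := ModuleCat.of (A ⊗[k] Aᵐᵒᵖ) (A ⊗[k] Aᵐᵒᵖ)
  have : Module.Projective Aᵐᵒᵖ (toRightModule.obj F) :=
    projective_op_of_rankOne (W := F) (.refl _ _)
  exact ((memAdd_self (R := A ⊗[k] Aᵐᵒᵖ) (X := W)).map toRightModule).projective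

variable (X : Type u) [AddCommGroup X] [Module A X]

theorem finite_and_projective_tensorRight [Module k X] [IsScalarTower k A X] [Module.Finite k X]
    [Module.Projective k X] [Module.Finite (A ⊗[k] Aᵐᵒᵖ) W] [Module.Projective (A ⊗[k] Aᵐᵒᵖ) W] :
    Module.Finite A ((tensorRight X).obj W) ∧ Module.Projective A ((tensorRight X).obj W) := by
  let F := ModuleCat.of (A ⊗[k] Aᵐᵒᵖ) (A ⊗[k] Aᵐᵒᵖ)
  let e := tensorEquivOfRankOne (W := F) (X := X) (.refl _ _)
  have : Module.Finite A ((tensorRight X).obj F) := .equiv e.symm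
  have : Module.Projective A ((tensorRight X).obj F) := .of_equiv e.symm
  have h := (memAdd_self (R := A ⊗[k] Aᵐᵒᵖ) (X := W)).map (tensorRight X)
  exact ⟨h.finite, h.projective⟩

end Projective

section Syzygy

variable {K P : ModuleCat.{u} (A ⊗[k] Aᵐᵒᵖ)} {f : K →ₗ[A ⊗[k] Aᵐᵒᵖ] P}
  {g : P →ₗ[A ⊗[k] Aᵐᵒᵖ] W}

theorem SES.exists_rightLinear_splitting [Module.Projective Aᵐᵒᵖ W]
    (h : SES (A ⊗[k] Aᵐᵒᵖ) f g) :
    ∃ (r : P →ₗ[Aᵐᵒᵖ] K) (s : W →ₗ[Aᵐᵒᵖ] P), r ∘ₗ rightLinear f = .id ∧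
      rightLinear g ∘ₗ s = .id ∧ rightLinear f ∘ₗ r + s ∘ₗ rightLinear g = .id := by
  obtain ⟨s, hs⟩ := Module.projective_lifting_property (rightLinear g) .id h.2.1
  have hexact : Function.Exact (rightLinear f) (rightLinear g) :=
    fun y ↦ (SetLike.ext_iff.mp h.2.2 y).symm
  obtain ⟨e, hf, hg⟩ := hexact.splitSurjectiveEquiv h.1 ⟨s, hs⟩
  refine ⟨.fst _ _ _ ∘ₗ e.toLinearMap, e.symm.toLinearMap ∘ₗ .inr _ _ _, ?_, ?_, ?_⟩
  · ext; simp [hf]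
  · ext; simp [hg]
  · ext y
    apply e.injective
    ext <;> simp [hf, hg]

variable (X : Type u) [AddCommGroup X] [Module A X]

theorem tensorRight_ses [Module.Projective Aᵐᵒᵖ W] (h : SES (A ⊗[k] Aᵐᵒᵖ) f g) :
    SES A ((tensorRight X).map (ModuleCat.ofHom f)).hom
      ((tensorRight X).map (ModuleCat.ofHom g)).hom := by
  obtain ⟨r, s, hr, hs, hrs⟩ := h.exists_rightLinear_splitting
  have hr' (t : BalancedTensor A K X) : map r .id (map (rightLinear f) .id t) = t := by
    rw [← AddMonoidHom.comp_apply, ← map_comp_left, hr, map_id, AddMonoidHom.id_apply]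
  have hs' (t : BalancedTensor A W X) : map (rightLinear g) .id (map s .id t) = t := by
    rw [← AddMonoidHom.comp_apply, ← map_comp_left, hs, map_id, AddMonoidHom.id_apply]
  have hrs' (t : BalancedTensor A P X) :
      map (rightLinear f) .id (map r .id t) + map s .id (map (rightLinear g) .id t) = t := by
    rw [← AddMonoidHom.comp_apply, ← map_comp_left, ← AddMonoidHom.comp_apply, ← map_comp_left,
      ← AddMonoidHom.add_apply, ← map_add_left, hrs, map_id, AddMonoidHom.id_apply]
  refine ⟨Function.LeftInverse.injective hr', Function.RightInverse.surjective hs', ?_⟩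
  refine le_antisymm ?_ fun t (ht : map (rightLinear g) .id t = 0) ↦ ⟨map r .id t, ?_⟩
  · rw [LinearMap.range_le_ker_iff, ← ModuleCat.hom_comp, ← Functor.map_comp,
      ← ModuleCat.ofHom_comp, h.comp_eq_zero, ModuleCat.ofHom_zero, Functor.map_zero,
      ModuleCat.hom_zero]
  · have hrt := hrs' t
    rwa [ht, map_zero, add_zero] at hrt

theorem IsSyzygyStep.projective_op [Module.Projective k A] [Module.Projective Aᵐᵒᵖ W]
    (h : IsSyzygyStep (A ⊗[k] Aᵐᵒᵖ) W K) : Module.Projective Aᵐᵒᵖ K := by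
  obtain ⟨P, _, _, f, g, h⟩ := h
  obtain ⟨r, s, hr, -⟩ := h.exists_rightLinear_splitting
  have : Module.Projective Aᵐᵒᵖ P := projective_op_of_projective
  exact .of_split _ r hr

variable [Module k X] [IsScalarTower k A X] [Module.Finite k X] [Module.Projective k X]

theorem IsSyzygyStep.tensorRight_obj [Module.Projective Aᵐᵒᵖ W]
    (h : IsSyzygyStep (A ⊗[k] Aᵐᵒᵖ) W K) :
    IsSyzygyStep A ((tensorRight X).obj W) ((tensorRight X).obj K) := by
  obtain ⟨P, _, _, f, g, h⟩ := h
  have ⟨_, _⟩ := finite_and_projective_tensorRight (W := P) X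
  exact ⟨_, ‹_›, ‹_›, _, _, tensorRight_ses X h⟩

theorem IsNthSyzygy.tensorRight_obj [Module.Projective k A] {l : ℕ} [Module.Projective Aᵐᵒᵖ W]
    (h : IsNthSyzygy (A ⊗[k] Aᵐᵒᵖ) l W K) :
    IsNthSyzygy A l ((tensorRight X).obj W) ((tensorRight X).obj K) := by
  induction l generalizing W with
  | zero =>
    obtain ⟨e⟩ := h
    exact ⟨((tensorRight X).mapIso e.toModuleIso).toLinearEquiv⟩
  | succ l ih =>
    obtain ⟨K₁, hK₁, h⟩ := h
    have := hK₁.projective_op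
    exact ⟨_, hK₁.tensorRight_obj X, ih h⟩

end Syzygy

section EnvModuleCat

variable (k A) (T : Type u) [AddCommGroup T] [Module k T] [Module A T] [Module Aᵐᵒᵖ T]
  [IsScalarTower k A T] [IsScalarTower k Aᵐᵒᵖ T] [SMulCommClass A Aᵐᵒᵖ T]

/-- The right module underlying `envModuleCat k A T` is `T`. -/
noncomputable def envModuleCatEquiv : envModuleCat k A T ≃ₗ[Aᵐᵒᵖ] T where
  __ := AddEquiv.refl T
  map_smul' b t :=
    (TensorProduct.Algebra.smul_def (M := T) 1 b t).trans (one_smul A (b • AddEquiv.refl T t))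

theorem envModuleCatEquiv_smul (a : A) (t : envModuleCat k A T) :
    envModuleCatEquiv k A T (a • t) = a • envModuleCatEquiv k A T t :=
  (TensorProduct.Algebra.smul_def (M := T) a 1 t).trans
    (congrArg (a • ·) (one_smul Aᵐᵒᵖ (envModuleCatEquiv k A T t)))

instance : Module.Projective Aᵐᵒᵖ (envModuleCat k A A) :=
  let e : A ≃ₗ[Aᵐᵒᵖ] Aᵐᵒᵖ := { MulOpposite.opAddEquiv with map_smul' := fun _ _ ↦ rfl }
  .of_equiv (e.symm.trans (envModuleCatEquiv k A A).symm)

/-- Tensoring with `envModuleCat k A T` is tensoring with the bimodule `T`. -/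
noncomputable def tensorRightEnvModuleCatEquiv (X : Type u) [AddCommGroup X] [Module A X] :
    BalancedTensor A (envModuleCat k A T) X ≃ₗ[A] BalancedTensor A T X :=
  congrLeft (envModuleCatEquiv k A T) (envModuleCatEquiv_smul k A T)

end EnvModuleCat

end Bimodule

section General

open scoped TensorProduct
open BalancedTensor

variable {k A B : Type u} [Field k] [Ring A] [Ring B] [Algebra k A] [Algebra k B]
  {M N : Type u} [AddCommGroup M] [Module k M] [Module A M] [Module Bᵐᵒᵖ M]
  [IsScalarTower k A M] [IsScalarTower k Bᵐᵒᵖ M] [SMulCommClass A Bᵐᵒᵖ M]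
  [AddCommGroup N] [Module k N] [Module B N] [Module Aᵐᵒᵖ N]
  [IsScalarTower k B N] [IsScalarTower k Aᵐᵒᵖ N] [SMulCommClass B Aᵐᵒᵖ N]

theorem tensorRight_envModuleCat_mem_bracket [Module.Finite Bᵐᵒᵖ M] [Module.Projective Bᵐᵒᵖ M]
    {X : Type u} [AddCommGroup X] [Module A X] {U : ModuleCat.{u} B} {n : ℕ}
    (h : ModuleCat.of B (BalancedTensor A N X) ∈ bracket B U n) :
    (tensorRight X).obj (envModuleCat k A (BalancedTensor B M N)) ∈
      bracket A ((tensorFunctor B M A).obj U) n :=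
  bracket_of_retract
    (retractOfEquiv ((tensorRightEnvModuleCatEquiv k A _ X).trans (assoc A B A M N X)))
    (bracket_map (F := tensorFunctor B M A) (tensorFunctor_shortExact A) h)

theorem extDim_of_singularEquivalence_level_general [Module.Finite k A] [Module.Finite A M]
    [Module.Projective Bᵐᵒᵖ M] [Module.Finite B N] {l : ℕ}
    (h : StablyIsoNthSyzygy (A ⊗[k] Aᵐᵒᵖ) l (envModuleCat k A (BalancedTensor B M N))
      (envModuleCat k A A)) :
    extDim A ≤ extDim B + l := by
  obtain ⟨K, hK, hMN⟩ := h
  have : Module.Finite k M := .trans A M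
  have : Module.Finite Bᵐᵒᵖ M := .of_restrictScalars_finite k Bᵐᵒᵖ M
  refine extDimCat_le_add l fun n U _ hU ↦ ?_
  let FU := (tensorFunctor B M A).obj U
  have : Module.Finite A FU := inferInstanceAs (Module.Finite A (BalancedTensor B M U))
  let U' := ModuleCat.of A (FU × A)
  obtain ⟨V, hV, hUV⟩ := exists_mem_bracket_of_isNthSyzygy (k := k) l U'
  refine ⟨V, hV, fun X (_ : Module.Finite A X) ↦ ?_⟩
  let _ : Module k X := Module.compHom X (algebraMap k A)
  have : IsScalarTower k A X := .of_compHom k A X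
  have : Module.Finite k X := .trans A X
  have hX : Retract X ((tensorRight X).obj (envModuleCat k A A)) :=
    retractOfEquiv ((tensorRightEnvModuleCatEquiv k A A X).trans (lid A X)).symm
  have hMNX : (tensorRight X).obj (envModuleCat k A (BalancedTensor B M N)) ∈
      bracket A U' (n + 1) :=
    bracket_mono (retractProdLeft FU (.of A A)) _ <|
      tensorRight_envModuleCat_mem_bracket <| hU <|
      inferInstanceAs (Module.Finite B (BalancedTensor A N X))
  have hKX : (tensorRight X).obj K ∈ bracket A U' (n + 1) := by
    refine bracket_map_of_stablyIsomorphic (fun P _ _ ↦ ?_) hMN hMNX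
    have ⟨_, _⟩ := finite_and_projective_tensorRight (W := P) X
    exact memAdd_self.mono (retractProdRight FU (.of A A))
  rw [Nat.add_right_comm]
  exact bracket_of_retract hX (hUV _ _ _ (hK.tensorRight_obj X) hKX)

end General

section Statement

open scoped TensorProduct

variable (k : Type u) [Field k]
variable (A B : Type u) [Ring A] [Ring B] [Algebra k A] [Algebra k B]
variable [Module.Finite k A] [Module.Finite k B]
variable (M : Type u) [AddCommGroup M] [Module k M] [Module A M] [Module Bᵐᵒᵖ M]
variable [IsScalarTower k A M] [IsScalarTower k Bᵐᵒᵖ M] [SMulCommClass A Bᵐᵒᵖ M]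
variable (N : Type u) [AddCommGroup N] [Module k N] [Module B N] [Module Aᵐᵒᵖ N]
variable [IsScalarTower k B N] [IsScalarTower k Aᵐᵒᵖ N] [SMulCommClass B Aᵐᵒᵖ N]

/-- **Theorem 2.(1)**: if the finite dimensional algebras `A` and `B` are singularly
equivalent of Morita type with level `l`, then `|ext.dim(A) − ext.dim(B)| ≤ l`. -/
theorem extDim_of_singularEquivalence_level (l : ℕ)
    (h : SingularEquivalenceOfMoritaTypeWithLevel k A B M N l) :
    extDim A ≤ extDim B + l ∧ extDim B ≤ extDim A + l := by
  obtain ⟨_, _, _, _, _, _, _, _, hMN, hNM⟩ := h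
  exact ⟨extDim_of_singularEquivalence_level_general <|
      hMN _ (BalancedTensor.tmul B) BalancedTensor.isTensorProductOver_tmul
        (fun _ _ _ ↦ rfl) (fun _ _ _ ↦ rfl) fun _ _ _ ↦ rfl,
    extDim_of_singularEquivalence_level_general <|
      hNM _ (BalancedTensor.tmul A) BalancedTensor.isTensorProductOver_tmul
        (fun _ _ _ ↦ rfl) (fun _ _ _ ↦ rfl) fun _ _ _ ↦ rfl⟩

end Statement

end ExtDim
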